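/- arXiv:2512.05460 — 2 statements merged into one kernel-verified Lean document; each statement's English description precedes it below -/
import Mathlib

section
/- Let S be a finite set with |S| = 2k, where k ≥ 1, and let i, j be two distinct elements of S. Consider all pairs (M, σ), where M is a perfect matching of S and σ : S → {−1, +1} is a sign assignment satisfying σ(u) = −σ(v) for every pair {u, v} ∈ M. Then the sum of σ(i)·σ(j) over all such pairs (M, σ), multiplied by (2k − 1), equals the negative of the total number of such pairs (M, σ). Equivalently, the average of σ(i)σ(j) over all such (M, σ) equals −1/(2k − 1). -/
/-- A perfect matching of a finite set `S`: a collection of unordered pairs of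
distinct elements of `S` (sets of cardinality 2) that are pairwise disjoint and
whose union is `S`. -/
def IsPerfectMatchingOf {α : Type*} [DecidableEq α] (S : Finset α)
    (M : Finset (Finset α)) : Prop :=
  (∀ e ∈ M, e.card = 2) ∧
  (∀ e ∈ M, ∀ f ∈ M, e ≠ f → Disjoint e f) ∧
  M.sup id = S

/-- The admissible pairs `(M, σ)`: `M` is a perfect matching of the (whole finite)
ground set and `σ` is a sign assignment (valued in `ℤˣ = {±1}`) giving opposite
signs to the two elements of each pair of `M`. -/
def IsMatchingSignPair {α : Type*} [Fintype α] [DecidableEq α]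
    (p : Finset (Finset α) × (α → ℤˣ)) : Prop :=
  IsPerfectMatchingOf (Finset.univ : Finset α) p.1 ∧
  ∀ e ∈ p.1, ∀ u ∈ e, ∀ v ∈ e, u ≠ v → p.2 u = -p.2 v

/-!
Since the two signs in every pair cancel, `∑ x, σ x = 0` for every admissible `(M, σ)`. Multiply by
`σ i` and sum over all `(M, σ)`: the diagonal term `x = i` contributes the number of admissible
pairs, and the remaining terms are all equal, because relabelling the ground set by a permutation
fixing `i` permutes the admissible pairs.
-/

section Correlation

variable {ι α R : Type*} [Fintype α] [Ring R]

theorem correlation_mul_card_sub_one_eq_neg_card (F : Finset ι) (x : ι → α → R) (i : α) (c : R)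
    (sum_eq_zero : ∀ p ∈ F, ∑ a, x p a = 0) (mul_self : ∀ p ∈ F, x p i * x p i = 1)
    (correlation : ∀ a, a ≠ i → ∑ p ∈ F, x p i * x p a = c) :
    c * ((Fintype.card α : R) - 1) = -(F.card : R) := by
  classical
  have diagonal : ∑ p ∈ F, x p i * x p i = F.card := by
    rw [Finset.sum_congr rfl mul_self, Finset.sum_const, nsmul_one]
  have off_diagonal : ∑ a ∈ Finset.univ.erase i, ∑ p ∈ F, x p i * x p a =
      c * ((Fintype.card α : R) - 1) := by
    rw [Finset.sum_congr rfl fun a ha => correlation a (Finset.ne_of_mem_erase ha),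
      Finset.sum_const, nsmul_eq_mul', Finset.cast_card_erase_of_mem (Finset.mem_univ i),
      Finset.card_univ]
  have total : ∑ a, ∑ p ∈ F, x p i * x p a = 0 := by
    rw [Finset.sum_comm]
    refine Finset.sum_eq_zero fun p hp => ?_
    rw [← Finset.mul_sum, sum_eq_zero p hp, mul_zero]
  rw [← Finset.add_sum_erase _ _ (Finset.mem_univ i), diagonal, off_diagonal] at total
  exact eq_neg_of_add_eq_zero_right total

end Correlation

section Matching

variable {α β A : Type*} [DecidableEq α] [DecidableEq β] [AddCommMonoid A]

theorem IsPerfectMatchingOf.sum_eq_sum_sum {S : Finset α} {M : Finset (Finset α)}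
    (hM : IsPerfectMatchingOf S M) (f : α → A) : ∑ x ∈ S, f x = ∑ e ∈ M, ∑ x ∈ e, f x := by
  obtain ⟨-, pairwise_disjoint, sup_eq⟩ := hM
  rw [← sup_eq, Finset.sup_eq_biUnion]
  exact Finset.sum_biUnion pairwise_disjoint

theorem IsPerfectMatchingOf.map {S : Finset α} {M : Finset (Finset α)}
    (hM : IsPerfectMatchingOf S M) (f : α ↪ β) :
    IsPerfectMatchingOf (S.map f) (M.map (Finset.mapEmbedding f).toEmbedding) := by
  obtain ⟨card_eq_two, pairwise_disjoint, sup_eq⟩ := hM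
  refine ⟨?_, ?_, ?_⟩
  · simpa using card_eq_two
  · simpa using pairwise_disjoint
  · ext y
    simp only [← sup_eq, Finset.mem_sup, Finset.mem_map]
    aesop

variable [Fintype α] [Fintype β]

theorem IsMatchingSignPair.sum_sign_eq_zero {p : Finset (Finset α) × (α → ℤˣ)}
    (hp : IsMatchingSignPair p) : ∑ x, (p.2 x : ℤ) = 0 := by
  obtain ⟨matching, opposite⟩ := hp
  rw [matching.sum_eq_sum_sum]
  refine Finset.sum_eq_zero fun e he => ?_
  obtain ⟨u, v, huv, rfl⟩ := Finset.card_eq_two.1 (matching.1 e he)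
  have opposite_uv : p.2 u = -p.2 v := opposite _ he u (by simp) v (by simp) huv
  rw [Finset.sum_pair huv, opposite_uv, Units.val_neg, neg_add_cancel]

/-- Transport of a pair `(M, σ)`, of a family of subsets and a sign assignment, along a bijection
`e` of ground sets: `M` becomes its image under `e`, and `σ` becomes `σ ∘ e.symm`. -/
def relabelMatchingSign (e : α ≃ β) :
    Finset (Finset α) × (α → ℤˣ) ≃ Finset (Finset β) × (β → ℤˣ) :=
  e.finsetCongr.finsetCongr.prodCongr (e.arrowCongr (Equiv.refl ℤˣ))

theorem IsMatchingSignPair.relabel {p : Finset (Finset α) × (α → ℤˣ)}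
    (hp : IsMatchingSignPair p) (e : α ≃ β) : IsMatchingSignPair (relabelMatchingSign e p) := by
  obtain ⟨matching, opposite⟩ := hp
  constructor
  · rw [← Finset.map_univ_equiv e]
    exact matching.map e.toEmbedding
  · intro d hd u hu v hv huv
    have hd' : d.map e.symm.toEmbedding ∈ p.1 := by simpa [relabelMatchingSign] using hd
    exact opposite _ hd' (e.symm u) (by simpa using hu) (e.symm v) (by simpa using hv)
      (e.symm.injective.ne huv)

theorem isMatchingSignPair_relabel_iff (e : α ≃ β) {p : Finset (Finset α) × (α → ℤˣ)} :
    IsMatchingSignPair (relabelMatchingSign e p) ↔ IsMatchingSignPair p :=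
  ⟨fun hp => (relabelMatchingSign e).symm_apply_apply p ▸ hp.relabel e.symm,
    fun hp => hp.relabel e⟩

open scoped Classical in
variable (α) in
/-- The finite set of all pairs `(M, σ)` of a perfect matching `M` of `α` and a sign assignment `σ`
compatible with `M`, over which the signs are averaged. -/
noncomputable def matchingSignPairs : Finset (Finset (Finset α) × (α → ℤˣ)) :=
  Finset.univ.filter fun p => IsMatchingSignPair p

theorem mem_matchingSignPairs {p : Finset (Finset α) × (α → ℤˣ)} :
    p ∈ matchingSignPairs α ↔ IsMatchingSignPair p := by
  simp [matchingSignPairs]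

theorem sum_matchingSignPairs_comp_equiv (e : α ≃ β) (g : (α → ℤˣ) → A) :
    ∑ p ∈ matchingSignPairs β, g (p.2 ∘ e) = ∑ p ∈ matchingSignPairs α, g p.2 := by
  refine (Finset.sum_equiv (relabelMatchingSign e) (fun p => ?_) fun p _ => ?_).symm
  · rw [mem_matchingSignPairs, mem_matchingSignPairs, isMatchingSignPair_relabel_iff]
  · congr 1
    ext x
    simp [relabelMatchingSign]

theorem sum_sign_mul_sign_eq_of_ne {i j l : α} (hj : j ≠ i) (hl : l ≠ i) :
    ∑ p ∈ matchingSignPairs α, (p.2 i : ℤ) * (p.2 j : ℤ) =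
      ∑ p ∈ matchingSignPairs α, (p.2 i : ℤ) * (p.2 l : ℤ) := by
  have swap_fixes : Equiv.swap j l i = i := Equiv.swap_apply_of_ne_of_ne hj.symm hl.symm
  simpa [swap_fixes] using
    sum_matchingSignPairs_comp_equiv (Equiv.swap j l) fun σ => (σ i : ℤ) * (σ l : ℤ)

end Matching

open scoped Classical in
/-- For a finite set of size `2k` and distinct elements `i, j`, the sum of
`σ(i)·σ(j)` over all pairs `(M, σ)` of a perfect matching `M` and a compatible
sign assignment `σ`, multiplied by `2k - 1`, equals the negative of the number of
such pairs: the average of `σ(i)σ(j)` is `-1/(2k-1)`. -/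
theorem sum_sign_products {α : Type*} [Fintype α] [DecidableEq α]
    (k : ℕ) (hk : 1 ≤ k) (hcard : Fintype.card α = 2 * k)
    (i j : α) (hij : i ≠ j) :
    (∑ p ∈ Finset.univ.filter
        (fun p : Finset (Finset α) × (α → ℤˣ) => IsMatchingSignPair p),
        ((p.2 i : ℤ) * (p.2 j : ℤ))) * (2 * (k : ℤ) - 1) =
      -((Finset.univ.filter
        (fun p : Finset (Finset α) × (α → ℤˣ) => IsMatchingSignPair p)).card : ℤ) := by
  change (∑ p ∈ matchingSignPairs α, (p.2 i : ℤ) * (p.2 j : ℤ)) * _ =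
    -((matchingSignPairs α).card : ℤ)
  have card_cast : 2 * (k : ℤ) = Fintype.card α := by simp [hcard]
  rw [card_cast]
  refine correlation_mul_card_sub_one_eq_neg_card _ (fun p a => (p.2 a : ℤ)) i _ ?_ ?_ ?_
  · exact fun p hp => (mem_matchingSignPairs.1 hp).sum_sign_eq_zero
  · exact fun p _ => Int.units_coe_mul_self (p.2 i)
  · exact fun a ha => sum_sign_mul_sign_eq_of_ne ha hij.symm
end

section
/- Let G be a connected simple graph on a finite vertex set V with |V| = n ≥ 2, with Laplacian matrix L, and let J be the n×n all-ones matrix. Then the matrix L + (1/n)J is invertible, and, writing L† = (L + (1/n)J)⁻¹ − (1/n)J, for any two distinct vertices s, t with b_st = e_s − e_t, the squared biharmonic distance β(s,t) = b_stᵀ (L†)² b_st and the effective resistance R_eff(s,t) = b_stᵀ L† b_st satisfy β(s,t) ≥ (1/2)·R_eff(s,t)². -/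
open Matrix

/-- The `n × n` all-ones matrix `J`. -/
def allOnes (V : Type*) [Fintype V] : Matrix V V ℝ := Matrix.of fun _ _ => 1

/-- The Moore–Penrose pseudoinverse of the Laplacian of `G`,
`L† = (L + (1/n)·J)⁻¹ - (1/n)·J`. -/
noncomputable def lapPinv {V : Type*} [Fintype V] [DecidableEq V]
    (G : SimpleGraph V) [DecidableRel G.Adj] : Matrix V V ℝ :=
  (G.lapMatrix ℝ + ((Fintype.card V : ℝ))⁻¹ • allOnes V)⁻¹
    - ((Fintype.card V : ℝ))⁻¹ • allOnes V

/-- The vector `b_st = e_s - e_t`. -/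
def bvec {V : Type*} [DecidableEq V] (s t : V) : V → ℝ :=
  Pi.single s 1 - Pi.single t 1

/-!
Invertibility: summing the entries of `(L + cJ)v = 0` kills the Laplacian part, because `L𝟙 = 0` and
`L` is symmetric. Hence `∑ v = 0`, so `Lv = 0`, so `v` is constant by connectedness, so `v = 0`.

The inequality is Cauchy–Schwarz for `b` and `L†b`: by symmetry of `L†`,
`(bᵀL†b)² ≤ ‖b‖² ‖L†b‖² = ‖b‖² · bᵀ(L†)²b`, and `‖b‖² = 2`.
-/

theorem sq_dotProduct_mulVec_le {m n R : Type*} [Fintype m] [Fintype n] [CommSemiring R]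
    [LinearOrder R] [IsStrictOrderedRing R] [ExistsAddOfLE R]
    (A : Matrix m n R) (x : m → R) (y : n → R) :
    (x ⬝ᵥ A *ᵥ y) ^ 2 ≤ (x ⬝ᵥ x) * (y ⬝ᵥ (Aᵀ * A) *ᵥ y) := by
  have normSq_mulVec : y ⬝ᵥ (Aᵀ * A) *ᵥ y = A *ᵥ y ⬝ᵥ A *ᵥ y := by
    rw [← mulVec_mulVec, dotProduct_transpose_mulVec]
  rw [normSq_mulVec]
  simpa only [dotProduct, sq] using Finset.sum_mul_sq_le_sq_mul_sq Finset.univ x (A *ᵥ y)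

theorem bvec_dotProduct_self {V : Type*} [Fintype V] [DecidableEq V] {s t : V} (hst : s ≠ t) :
    bvec s t ⬝ᵥ bvec s t = 2 := by
  simp [bvec, hst, hst.symm, one_add_one_eq_two]

theorem isSymm_allOnes {V : Type*} [Fintype V] : (allOnes V).IsSymm := rfl

theorem allOnes_mulVec_apply {V : Type*} [Fintype V] (v : V → ℝ) (i : V) :
    (allOnes V *ᵥ v) i = ∑ j, v j := by
  simp [allOnes, mulVec, dotProduct]

section Laplacian

variable {V : Type*} [Fintype V] [DecidableEq V] (G : SimpleGraph V) [DecidableRel G.Adj]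

theorem sum_lapMatrix_mulVec {R : Type*} [CommRing R] (v : V → R) :
    ∑ i, (G.lapMatrix R *ᵥ v) i = 0 := by
  calc ∑ i, (G.lapMatrix R *ᵥ v) i = (fun _ ↦ 1) ⬝ᵥ G.lapMatrix R *ᵥ v :=
        (one_dotProduct _).symm
    _ = G.lapMatrix R *ᵥ (fun _ ↦ 1) ⬝ᵥ v := by
        rw [dotProduct_mulVec, ← mulVec_transpose, (G.isSymm_lapMatrix R).eq]
    _ = 0 := by rw [G.lapMatrix_mulVec_const_eq_zero, zero_dotProduct]

theorem isSymm_lapPinv : (lapPinv G).IsSymm :=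
  ((G.isSymm_lapMatrix ℝ).add (isSymm_allOnes.smul _)).inv.sub (isSymm_allOnes.smul _)

variable {G}

theorem eq_zero_of_lapMatrix_mulVec_eq_zero_of_sum_eq_zero (hG : G.Preconnected) {v : V → ℝ}
    (hLv : G.lapMatrix ℝ *ᵥ v = 0) (hsum : ∑ i, v i = 0) : v = 0 := by
  have hconst : ∀ i j, v i = v j := fun i j ↦
    G.lapMatrix_mulVec_eq_zero_iff_forall_reachable.mp hLv i j (hG i j)
  ext i
  have : Nonempty V := ⟨i⟩
  have hcard : (Fintype.card V : ℝ) * v i = 0 := by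
    simpa [hconst _ i] using hsum
  simpa using hcard

theorem isUnit_lapMatrix_add_smul_allOnes (hG : G.Preconnected) {c : ℝ} (hc : c ≠ 0) :
    IsUnit (G.lapMatrix ℝ + c • allOnes V) := by
  rw [← mulVec_injective_iff_isUnit, ← coe_mulVecLin, injective_iff_map_eq_zero]
  intro v hv
  have hentry (i : V) : (G.lapMatrix ℝ *ᵥ v) i + c * ∑ j, v j = 0 := by
    simpa [add_mulVec, smul_mulVec, allOnes_mulVec_apply] using congrFun hv i
  have hsum : ∑ j, v j = 0 := by
    cases isEmpty_or_nonempty V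
    · exact Fintype.sum_empty v
    · have htotal : ∑ i, ((G.lapMatrix ℝ *ᵥ v) i + c * ∑ j, v j) = 0 :=
        Finset.sum_eq_zero fun i _ ↦ hentry i
      simpa [Finset.sum_add_distrib, sum_lapMatrix_mulVec, hc] using htotal
  have hLv : G.lapMatrix ℝ *ᵥ v = 0 := by
    ext i
    simpa [hsum] using hentry i
  exact eq_zero_of_lapMatrix_mulVec_eq_zero_of_sum_eq_zero hG hLv hsum

end Laplacian

/-- For a connected simple graph on `n ≥ 2` vertices with Laplacian `L`, the matrix
`L + (1/n)J` is invertible, and with `L† = (L + (1/n)J)⁻¹ - (1/n)J`, for any two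
distinct vertices `s, t`, the squared biharmonic distance
`β(s,t) = b_stᵀ (L†)² b_st` and the effective resistance
`R_eff(s,t) = b_stᵀ L† b_st` satisfy `β(s,t) ≥ (1/2)·R_eff(s,t)²`. -/
theorem biharmonic_ge_half_reff_sq {V : Type*} [Fintype V] [DecidableEq V]
    (G : SimpleGraph V) [DecidableRel G.Adj] (hconn : G.Connected)
    (hn : 2 ≤ Fintype.card V) (s t : V) (hst : s ≠ t) :
    IsUnit (G.lapMatrix ℝ + ((Fintype.card V : ℝ))⁻¹ • allOnes V) ∧
    (1 / 2) * (bvec s t ⬝ᵥ (lapPinv G *ᵥ bvec s t)) ^ 2 ≤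
      bvec s t ⬝ᵥ ((lapPinv G * lapPinv G) *ᵥ bvec s t) := by
  have card_ne_zero : (Fintype.card V : ℝ) ≠ 0 := by
    have := hconn.nonempty
    exact_mod_cast Fintype.card_ne_zero
  refine ⟨isUnit_lapMatrix_add_smul_allOnes hconn.preconnected (inv_ne_zero card_ne_zero), ?_⟩
  have cauchy_schwarz := sq_dotProduct_mulVec_le (lapPinv G) (bvec s t) (bvec s t)
  rw [(isSymm_lapPinv G).eq, bvec_dotProduct_self hst] at cauchy_schwarz
  linarith
end
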